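/- Let j, k, l be the permutations of {0,…,14} given in cycle notation by j = (0 14)(4 5)(9 10)(1 12)(7 11)(2 6), k = (4 6)(1 13)(8 9)(2 7), l = (14 1)(3 4)(12 2)(8 11), and j' = (0 11)(1 5)(3 4)(6 10)(8 9)(13 14), k' = (0 10)(1 2)(6 9)(12 14), l' = (0 5)(2 4)(6 7)(11 14). Let G be the subgroup of Sym(15) × Sym(15) generated by (j,j'), (k,k'), (l,l'), and let A = {(σ,τ) ∈ G : σ(0) = 0}, B = {(σ,τ) ∈ G : τ(0) = 0}. Then for every (σ,τ) ∈ G the number of fixed points of σ equals the number of fixed points of τ; A and B are Gassmann equivalent subgroups of G of index 15; and A and B are not conjugate in G. -/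

import Mathlib

open Equiv

/-- j = (0 14)(4 5)(9 10)(1 12)(7 11)(2 6) -/
def j : Perm (Fin 15) := swap 0 14 * swap 4 5 * swap 9 10 * swap 1 12 * swap 7 11 * swap 2 6
/-- k = (4 6)(1 13)(8 9)(2 7) -/
def k : Perm (Fin 15) := swap 4 6 * swap 1 13 * swap 8 9 * swap 2 7
/-- l = (14 1)(3 4)(12 2)(8 11) -/
def l : Perm (Fin 15) := swap 14 1 * swap 3 4 * swap 12 2 * swap 8 11
/-- j' = (0 11)(1 5)(3 4)(6 10)(8 9)(13 14) -/
def j' : Perm (Fin 15) := swap 0 11 * swap 1 5 * swap 3 4 * swap 6 10 * swap 8 9 * swap 13 14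
/-- k' = (0 10)(1 2)(6 9)(12 14) -/
def k' : Perm (Fin 15) := swap 0 10 * swap 1 2 * swap 6 9 * swap 12 14
/-- l' = (0 5)(2 4)(6 7)(11 14) -/
def l' : Perm (Fin 15) := swap 0 5 * swap 2 4 * swap 6 7 * swap 11 14

/-- The subgroup of Sym(15) × Sym(15) generated by (j,j'), (k,k'), (l,l'). -/
def G₀ : Subgroup (Perm (Fin 15) × Perm (Fin 15)) :=
  Subgroup.closure {(j, j'), (k, k'), (l, l')}

/-- A = {(σ,τ) ∈ G₀ : σ 0 = 0}, the point stabilizer in the first action. -/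
def A : Subgroup G₀ where
  carrier := {g | (g : Perm (Fin 15) × Perm (Fin 15)).1 0 = 0}
  one_mem' := rfl
  mul_mem' := by
    intro x y hx hy
    simp only [Set.mem_setOf_eq] at *
    simp [Subgroup.coe_mul, Perm.mul_apply, hx, hy]
  inv_mem' := by
    intro x hx
    simp only [Set.mem_setOf_eq] at *
    conv_lhs => rw [← hx]
    simp

/-- B = {(σ,τ) ∈ G₀ : τ 0 = 0}, the point stabilizer in the second action. -/
def B : Subgroup G₀ where
  carrier := {g | (g : Perm (Fin 15) × Perm (Fin 15)).2 0 = 0}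
  one_mem' := rfl
  mul_mem' := by
    intro x y hx hy
    simp only [Set.mem_setOf_eq] at *
    simp [Subgroup.coe_mul, Perm.mul_apply, hx, hy]
  inv_mem' := by
    intro x hx
    simp only [Set.mem_setOf_eq] at *
    conv_lhs => rw [← hx]
    simp

namespace Gassmann

/-- Incidence matrix rows of the points and planes of PG(3,2), as bit masks. -/
def rows : Fin 15 → Nat :=
  ![1335, 17051, 24909, 28838, 14419, 23593, 28180, 14090, 7045, 19906, 9953, 21360, 10680, 5340, 2670]

/-- Incidence matrix of points and planes. -/
def inc (x y : Fin 15) : Nat := rows x / 2 ^ (y : Nat) % 2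

set_option maxRecDepth 100000 in
lemma inc_row : ∀ x x' : Fin 15, ∑ y, inc x y * inc x' y = 3 + if x' = x then 4 else 0 := by
  decide +kernel

set_option maxRecDepth 100000 in
lemma inc_col : ∀ y y' : Fin 15, ∑ x, inc x y * inc x y' = 3 + if y' = y then 4 else 0 := by
  decide +kernel

set_option maxRecDepth 100000 in
lemma inc_j : ∀ x y : Fin 15, inc (j x) (j' y) = inc x y := by decide +kernel
set_option maxRecDepth 100000 in
lemma inc_k : ∀ x y : Fin 15, inc (k x) (k' y) = inc x y := by decide +kernel
set_option maxRecDepth 100000 in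
lemma inc_l : ∀ x y : Fin 15, inc (l x) (l' y) = inc x y := by decide +kernel

lemma inc_G (p : Perm (Fin 15) × Perm (Fin 15)) (hp : p ∈ G₀) :
    ∀ x y : Fin 15, inc (p.1 x) (p.2 y) = inc x y := by
  unfold G₀ at hp
  induction hp using Subgroup.closure_induction with
  | mem p hp =>
    simp only [Set.mem_insert_iff, Set.mem_singleton_iff] at hp
    rcases hp with rfl | rfl | rfl
    · exact inc_j
    · exact inc_k
    · exact inc_l
  | one => intro x y; rfl
  | mul p q _ _ hp hq => intro x y; simp [hp, hq]
  | inv p _ hp => intro x y; rw [← hp]; simp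

lemma fix_eq (p : Perm (Fin 15) × Perm (Fin 15)) (hp : p ∈ G₀) :
    Nat.card {x : Fin 15 // p.1 x = x} = Nat.card {x : Fin 15 // p.2 x = x} := by
  have h := inc_G p hp
  have h1 : ∑ x, ∑ y, inc x y * inc (p.1 x) y
      = 45 + 4 * Nat.card {x : Fin 15 // p.1 x = x} := by
    simp only [inc_row, Finset.sum_add_distrib]
    simp [Finset.sum_ite, Fintype.card_subtype, mul_comm]
  have h2 : ∑ y, ∑ x, inc x (p.2 y) * inc x y
      = 45 + 4 * Nat.card {x : Fin 15 // p.2 x = x} := by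
    simp only [inc_col, Finset.sum_add_distrib, eq_comm]
    simp [Finset.sum_ite, Fintype.card_subtype, mul_comm, eq_comm]
  have h3 : ∑ x, ∑ y, inc x y * inc (p.1 x) y = ∑ y, ∑ x, inc x (p.2 y) * inc x y := by
    rw [Finset.sum_comm]
    rw [← Equiv.sum_comp p.2]
    refine Finset.sum_congr rfl fun y _ => Finset.sum_congr rfl fun x _ => ?_
    rw [h]
  omega

/-- The first projection. -/
def f1 : G₀ →* Perm (Fin 15) := (MonoidHom.fst _ _).comp G₀.subtype
/-- The second projection. -/
def f2 : G₀ →* Perm (Fin 15) := (MonoidHom.snd _ _).comp G₀.subtype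

/-- The generators. -/
def gj : G₀ := ⟨(j, j'), Subgroup.subset_closure (by simp)⟩
/-- The generators. -/
def gk : G₀ := ⟨(k, k'), Subgroup.subset_closure (by simp)⟩
/-- The generators. -/
def gl : G₀ := ⟨(l, l'), Subgroup.subset_closure (by simp)⟩

lemma trans_aux (f : G₀ →* Perm (Fin 15)) (g : G₀) (x y : Fin 15) (h : f g x = y)
    (hx : ∃ u, f u 0 = x) : ∃ u, f u 0 = y := by
  obtain ⟨u, rfl⟩ := hx
  exact ⟨g * u, by simpa using h⟩

lemma trans1 (x : Fin 15) : ∃ u, f1 u 0 = x := by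
  have h0 : ∃ u, f1 u 0 = 0 := ⟨1, rfl⟩
  have h14 := trans_aux f1 gj 0 14 (by decide +kernel) h0
  have h1 := trans_aux f1 gl 14 1 (by decide +kernel) h14
  have h12 := trans_aux f1 gj 1 12 (by decide +kernel) h1
  have h13 := trans_aux f1 gk 1 13 (by decide +kernel) h1
  have h2 := trans_aux f1 gl 12 2 (by decide +kernel) h12
  have h6 := trans_aux f1 gj 2 6 (by decide +kernel) h2
  have h7 := trans_aux f1 gk 2 7 (by decide +kernel) h2
  have h4 := trans_aux f1 gk 6 4 (by decide +kernel) h6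
  have h11 := trans_aux f1 gj 7 11 (by decide +kernel) h7
  have h5 := trans_aux f1 gj 4 5 (by decide +kernel) h4
  have h3 := trans_aux f1 gl 4 3 (by decide +kernel) h4
  have h8 := trans_aux f1 gl 11 8 (by decide +kernel) h11
  have h9 := trans_aux f1 gk 8 9 (by decide +kernel) h8
  have h10 := trans_aux f1 gj 9 10 (by decide +kernel) h9
  fin_cases x <;> assumption

lemma trans2 (x : Fin 15) : ∃ u, f2 u 0 = x := by
  have h0 : ∃ u, f2 u 0 = 0 := ⟨1, rfl⟩
  have h11 := trans_aux f2 gj 0 11 (by decide +kernel) h0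
  have h10 := trans_aux f2 gk 0 10 (by decide +kernel) h0
  have h5 := trans_aux f2 gl 0 5 (by decide +kernel) h0
  have h14 := trans_aux f2 gl 11 14 (by decide +kernel) h11
  have h6 := trans_aux f2 gj 10 6 (by decide +kernel) h10
  have h1 := trans_aux f2 gj 5 1 (by decide +kernel) h5
  have h13 := trans_aux f2 gj 14 13 (by decide +kernel) h14
  have h12 := trans_aux f2 gk 14 12 (by decide +kernel) h14
  have h9 := trans_aux f2 gk 6 9 (by decide +kernel) h6
  have h7 := trans_aux f2 gl 6 7 (by decide +kernel) h6
  have h2 := trans_aux f2 gk 1 2 (by decide +kernel) h1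
  have h8 := trans_aux f2 gj 9 8 (by decide +kernel) h9
  have h4 := trans_aux f2 gl 2 4 (by decide +kernel) h2
  have h3 := trans_aux f2 gj 4 3 (by decide +kernel) h4
  fin_cases x <;> assumption

lemma count {H : Type*} [Group H] [Finite H] (f : H →* Perm (Fin 15))
    (ht : ∀ x, ∃ u, f u 0 = x) (g : H) :
    15 * Nat.card {x : H // f x 0 = 0 ∧ IsConj g x} =
      ∑ᶠ x : {x : H // IsConj g x}, Nat.card {i : Fin 15 // f x i = i} := by
  classical
  have := Fintype.ofFinite H
  have h1 : ∀ i : Fin 15, Nat.card {x : H // f x i = i ∧ IsConj g x} =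
      Nat.card {x : H // f x 0 = 0 ∧ IsConj g x} := by
    intro i
    obtain ⟨u, hu⟩ := ht i
    refine (Nat.card_congr ((MulAut.conj u).toEquiv.subtypeEquiv fun x => ?_)).symm
    have e1 : f (u * x * u⁻¹) i = i ↔ f x 0 = 0 := by
      subst hu; simp
    have e2 : IsConj g (u * x * u⁻¹) ↔ IsConj g x := by
      have : IsConj x (u * x * u⁻¹) := isConj_iff.2 ⟨u, rfl⟩
      exact ⟨fun h => h.trans this.symm, fun h => h.trans this⟩
    exact (and_congr e1 e2).symm
  have h2 : ∑ i : Fin 15, Nat.card {x : H // f x i = i ∧ IsConj g x} =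
      15 * Nat.card {x : H // f x 0 = 0 ∧ IsConj g x} := by
    rw [Finset.sum_congr rfl fun i _ => h1 i, Finset.sum_const, Finset.card_univ,
      Fintype.card_fin, smul_eq_mul]
  rw [← h2, finsum_eq_sum_of_fintype, ← Nat.card_sigma, ← Nat.card_sigma]
  refine Nat.card_congr ⟨fun a => ⟨⟨a.2.1, a.2.2.2⟩, ⟨a.1, a.2.2.1⟩⟩,
    fun a => ⟨a.2.1, ⟨a.1.1, a.2.2, a.1.2⟩⟩, fun _ => rfl, fun _ => rfl⟩

lemma index_eq {H : Type*} [Group H] (f : H →* Perm (Fin 15))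
    (ht : ∀ x, ∃ u, f u 0 = x) (K : Subgroup H) (hK : ∀ x, x ∈ K ↔ f x 0 = 0) :
    K.index = 15 := by
  let _ : MulAction H (Fin 15) := MulAction.compHom (Fin 15) f
  have hs : K = MulAction.stabilizer H (0 : Fin 15) := by
    ext x
    rw [hK, MulAction.mem_stabilizer_iff]; rfl
  have ho : MulAction.orbit H (0 : Fin 15) = Set.univ := by
    ext x
    simp only [Set.mem_univ, iff_true]
    exact ht x
  rw [hs, MulAction.index_stabilizer, ho, Set.ncard_univ]
  simp

set_option maxRecDepth 100000 in
lemma no_fix : ∀ q : Fin 15, ¬ (k' q = q ∧ l' q = q ∧ j' (k' (j' q)) = q ∧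
    j' (l' (j' (k' (j' (l' (j' q)))))) = q) := by decide +kernel

end Gassmann

open Gassmann in
/-- Every element of `G₀` has equally many fixed points in its two coordinates; the point
stabilizers `A` and `B` are Gassmann equivalent of index 15, but not conjugate. -/
theorem fixed_gassmann_not_conjugate :
    (∀ p ∈ G₀, Nat.card {x : Fin 15 // p.1 x = x} = Nat.card {x : Fin 15 // p.2 x = x}) ∧
    (∀ g : G₀,
      Nat.card ((A : Set G₀) ∩ {x : G₀ | IsConj g x} : Set G₀) =
      Nat.card ((B : Set G₀) ∩ {x : G₀ | IsConj g x} : Set G₀)) ∧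
    A.index = 15 ∧ B.index = 15 ∧
    ¬ ∃ x : G₀, Subgroup.map (MulAut.conj x).toMonoidHom A = B := by
  refine ⟨fix_eq, fun g => ?_, index_eq f1 trans1 A fun x => Iff.rfl,
    index_eq f2 trans2 B fun x => Iff.rfl, ?_⟩
  · have h1 := count f1 trans1 g
    have h2 := count f2 trans2 g
    have h3 : ∀ x : {x : G₀ // IsConj g x}, Nat.card {i : Fin 15 // f1 x i = i} =
        Nat.card {i : Fin 15 // f2 x i = i} := fun x => fix_eq x.1.1 x.1.2
    rw [finsum_congr h3, ← h2] at h1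
    exact Nat.eq_of_mul_eq_mul_left (by norm_num) h1
  · rintro ⟨x, hx⟩
    have key : ∀ g : G₀, f1 g 0 = 0 → f2 g ((f2 x)⁻¹ 0) = (f2 x)⁻¹ 0 := by
      intro g hg
      have hm : (MulAut.conj x).toMonoidHom g ∈ B := by
        rw [← hx]
        exact Subgroup.mem_map_of_mem _ hg
      have hm' : f2 (x * g * x⁻¹) 0 = 0 := hm
      rw [map_mul, map_mul, map_inv, Perm.mul_apply, Perm.mul_apply] at hm'
      exact Perm.eq_inv_iff_eq.2 hm'
    have h1 := key gk (by decide +kernel)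
    have h2 := key gl (by decide +kernel)
    have h3 := key (gj * gk * gj) (by decide +kernel)
    have h4 := key (gj * gl * gj * gk * gj * gl * gj) (by decide +kernel)
    have ej : f2 gj = j' := rfl
    have ek : f2 gk = k' := rfl
    have el : f2 gl = l' := rfl
    generalize (f2 x)⁻¹ 0 = q at h1 h2 h3 h4
    simp only [map_mul, Perm.mul_apply, ej, ek, el] at h1 h2 h3 h4
    exact no_fix q ⟨h1, h2, h3, h4⟩
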